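/- arXiv:0708.2981 — 7 statements merged into one kernel-verified Lean document; each statement's English description precedes it below -/
import Mathlib

section
/- Let n ≥ 1 and let (A(t))_{t∈ℕ} be a sequence of confidence matrices (row-stochastic n×n matrices with nonnegative real entries) such that for some δ > 0 and all t: (1) every diagonal entry of A(t) is positive; (2) the zero pattern of A(t) is symmetric, i.e. A(t)_{ij} > 0 ⟺ A(t)_{ji} > 0 for all i,j; (3) every positive entry of A(t) is greater than δ. Then there exist a time step t₀ ∈ ℕ and a partition of {1,…,n} into pairwise disjoint nonempty classes I₁,…,I_p such that the backward accumulation A(0,t) := A(t−1)·A(t−2)···A(0) converges as t → ∞ to K·A(0,t₀), where K is an n×n row-stochastic matrix with K_{ij} = 0 whenever i and j lie in different classes, and for each class I_l the rows of K indexed by I_l are all equal (so K, after simultaneously permuting rows and columns according to I₁,…,I_p, is block diagonal with consensus-matrix blocks K₁,…,K_p). -/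
open Matrix Filter Finset

/-- A confidence matrix is a row-stochastic matrix with nonnegative entries. -/
def RowStochastic {n : ℕ} (A : Matrix (Fin n) (Fin n) ℝ) : Prop :=
  (∀ i j, 0 ≤ A i j) ∧ ∀ i, ∑ j, A i j = 1

/-- Backward accumulation `A(0,t) = A(t-1) ⋯ A(0)`. -/
def backProd {n : ℕ} (A : ℕ → Matrix (Fin n) (Fin n) ℝ) : ℕ → Matrix (Fin n) (Fin n) ℝ
  | 0 => 1
  | t + 1 => A t * backProd A t

/-- The vector dynamics driven by `B`. -/
def IsDyn {n : ℕ} (B : ℕ → Matrix (Fin n) (Fin n) ℝ) (x : ℕ → Fin n → ℝ) : Prop :=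
  ∀ t i, x (t + 1) i = ∑ j, B t i j * x t j

theorem IsDyn.affine {n : ℕ} {B : ℕ → Matrix (Fin n) (Fin n) ℝ} {x : ℕ → Fin n → ℝ}
    (hB : ∀ t, RowStochastic (B t)) (hx : IsDyn B x) (a m : ℝ) :
    IsDyn B (fun t i => a * x t i + m) := by
  intro t i
  have h := (hB t).2 i
  simp only [hx t i, mul_add, Finset.sum_add_distrib, ← Finset.sum_mul, h, one_mul,
    Finset.mul_sum]
  congr 1
  exact Finset.sum_congr rfl fun j _ => by ring

theorem dyn_mono {n : ℕ} {B : ℕ → Matrix (Fin n) (Fin n) ℝ} {x : ℕ → Fin n → ℝ}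
    (hB : ∀ t, RowStochastic (B t)) (hx : IsDyn B x) (S : Finset (Fin n)) (s t : ℕ)
    (hst : s ≤ t) (hS : ∀ u, s ≤ u → u < t → ∀ i ∈ S, ∀ j, j ∉ S → B u i j = 0)
    (m : ℝ) (hm : ∀ i ∈ S, m ≤ x s i) : ∀ i ∈ S, m ≤ x t i := by
  induction t, hst using Nat.le_induction with
  | base => exact hm
  | succ t hst ih =>
    have ih' := ih (fun u h1 h2 => hS u h1 (by omega))
    intro i hi
    rw [hx t i]
    calc m = ∑ j, B t i j * m := by rw [← Finset.sum_mul, (hB t).2 i, one_mul]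
      _ ≤ _ := by
        refine Finset.sum_le_sum fun j _ => ?_
        by_cases hj : j ∈ S
        · exact mul_le_mul_of_nonneg_left (ih' j hj) ((hB t).1 i j)
        · rw [hS t hst (by omega) i hi j hj]; simp

theorem dyn_mono_le {n : ℕ} {B : ℕ → Matrix (Fin n) (Fin n) ℝ} {x : ℕ → Fin n → ℝ}
    (hB : ∀ t, RowStochastic (B t)) (hx : IsDyn B x) (S : Finset (Fin n)) (s t : ℕ)
    (hst : s ≤ t) (hS : ∀ u, s ≤ u → u < t → ∀ i ∈ S, ∀ j, j ∉ S → B u i j = 0)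
    (m : ℝ) (hm : ∀ i ∈ S, x s i ≤ m) : ∀ i ∈ S, x t i ≤ m := by
  have := dyn_mono hB (hx.affine hB (-1) m) S s t hst hS 0
    (fun i hi => by have := hm i hi; linarith)
  intro i hi
  have := this i hi
  linarith

theorem dyn_grow {n : ℕ} {B : ℕ → Matrix (Fin n) (Fin n) ℝ} {x : ℕ → Fin n → ℝ}
    {δ : ℝ} (hδ : 0 < δ) (hδ1 : δ ≤ 1)
    (hB : ∀ t, RowStochastic (B t)) (hx : IsDyn B x)
    (hdiag : ∀ t i, 0 < B t i i)
    (hsym : ∀ t i j, 0 < B t i j ↔ 0 < B t j i)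
    (hmin : ∀ t i j, 0 < B t i j → δ < B t i j)
    (C : Finset (Fin n)) (hC : ∀ t, ∀ i ∈ C, ∀ j, j ∉ C → B t i j = 0)
    (hconn : ∀ S, S ⊆ C → S.Nonempty → S ≠ C → ∀ s, ∃ t, s ≤ t ∧
      ∃ i ∈ S, ∃ j ∈ C, j ∉ S ∧ 0 < B t i j) :
    ∀ k : ℕ, ∀ S, S ⊆ C → S.Nonempty → C.card ≤ S.card + k → ∀ s : ℕ, ∀ c : ℝ, 0 ≤ c →
      (∀ i ∈ C, 0 ≤ x s i) → (∀ i ∈ S, c ≤ x s i) →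
      ∃ s', s ≤ s' ∧ ∀ i ∈ C, δ ^ k * c ≤ x s' i := by
  classical
  intro k
  induction k with
  | zero =>
    intro S hSC hne hcard s c hc h0 hcS
    have : S = C := Finset.eq_of_subset_of_card_le hSC (by simpa using hcard)
    subst this
    exact ⟨s, le_rfl, by simpa using hcS⟩
  | succ k ih =>
    intro S hSC hne hcard s c hc h0 hcS
    by_cases hSe : S = C
    · subst hSe
      refine ⟨s, le_rfl, fun i hi => le_trans ?_ (hcS i hi)⟩
      exact mul_le_of_le_one_left hc (pow_le_one₀ hδ.le hδ1)
    have hex := hconn S hSC hne hSe s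
    let t := Nat.find hex
    obtain ⟨hst, i₀, hi₀, j₀, hj₀C, hj₀S, hpos⟩ := Nat.find_spec hex
    change s ≤ t at hst
    change 0 < B t i₀ j₀ at hpos
    have hclosed : ∀ u, s ≤ u → u < t → ∀ i ∈ S, ∀ j, j ∉ S → B u i j = 0 := by
      intro u hsu hut i hi j hj
      by_cases hjC : j ∈ C
      · have := Nat.find_min hex hut
        by_contra hne0
        exact this ⟨hsu, i, hi, j, hjC, hj, lt_of_le_of_ne ((hB u).1 i j) (Ne.symm hne0)⟩
      · exact hC u i (hSC hi) j hjC
    have hcS' := dyn_mono hB hx S s t hst hclosed c hcS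
    have h0t := dyn_mono hB hx C s t hst (fun u _ _ => hC u) 0 h0
    have h0t' := dyn_mono hB hx C s (t+1) (by omega) (fun u _ _ => hC u) 0 h0
    let S' := C.filter (fun i => ∃ k ∈ S, 0 < B t i k)
    have hSS' : insert j₀ S ⊆ S' := by
      intro i hi
      rw [Finset.mem_insert] at hi
      rcases hi with rfl | hi
      · exact Finset.mem_filter.2 ⟨hj₀C, i₀, hi₀, (hsym t _ _).1 hpos⟩
      · exact Finset.mem_filter.2 ⟨hSC hi, i, hi, hdiag t i⟩
    have hcard' : S.card + 1 ≤ S'.card := by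
      rw [← Finset.card_insert_of_notMem hj₀S]
      exact Finset.card_le_card hSS'
    obtain ⟨s', hs', h⟩ := ih S' (Finset.filter_subset _ _)
      ⟨j₀, hSS' (Finset.mem_insert_self _ _)⟩ (by omega) (t+1) (δ * c) (by positivity) h0t' (by
        intro i hi
        obtain ⟨hiC, l, hl, hpl⟩ := Finset.mem_filter.1 hi
        rw [hx t i]
        calc δ * c ≤ B t i l * x t l :=
              mul_le_mul (hmin t i l hpl).le (hcS' l hl) hc ((hB t).1 i l)
          _ ≤ _ := by
            refine Finset.single_le_sum (f := fun j => B t i j * x t j) (fun j _ => ?_)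
              (Finset.mem_univ l)
            by_cases hj : j ∈ C
            · exact mul_nonneg ((hB t).1 i j) (h0t j hj)
            · simp [hC t i hiC j hj])
    refine ⟨s', by omega, fun i hi => ?_⟩
    have := h i hi
    rwa [pow_succ, mul_assoc]

theorem dyn_contract {n : ℕ} {B : ℕ → Matrix (Fin n) (Fin n) ℝ} {x : ℕ → Fin n → ℝ}
    {δ : ℝ} (hδ : 0 < δ) (hδ1 : δ ≤ 1)
    (hB : ∀ t, RowStochastic (B t)) (hx : IsDyn B x)
    (hdiag : ∀ t i, 0 < B t i i)
    (hsym : ∀ t i j, 0 < B t i j ↔ 0 < B t j i)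
    (hmin : ∀ t i j, 0 < B t i j → δ < B t i j)
    (C : Finset (Fin n)) (hCne : C.Nonempty) (hC : ∀ t, ∀ i ∈ C, ∀ j, j ∉ C → B t i j = 0)
    (hconn : ∀ S, S ⊆ C → S.Nonempty → S ≠ C → ∀ s, ∃ t, s ≤ t ∧
      ∃ i ∈ S, ∃ j ∈ C, j ∉ S ∧ 0 < B t i j) (k : ℕ) :
    ∃ s m, ∃ M, (∀ i ∈ C, m ≤ x s i ∧ x s i ≤ M) ∧
      ∃ d, d = (x 0 (C.exists_max_image (x 0) hCne).choose
        - x 0 (C.exists_min_image (x 0) hCne).choose) ∧ M - m ≤ (1 - δ ^ C.card) ^ k * d := by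
  have hq : 0 ≤ 1 - δ ^ C.card := sub_nonneg.2 (pow_le_one₀ hδ.le hδ1)
  induction k with
  | zero =>
    refine ⟨0, x 0 (C.exists_min_image (x 0) hCne).choose,
      x 0 (C.exists_max_image (x 0) hCne).choose, fun i hi => ⟨?_, ?_⟩, _, rfl, ?_⟩
    · exact (C.exists_min_image (x 0) hCne).choose_spec.2 i hi
    · exact (C.exists_max_image (x 0) hCne).choose_spec.2 i hi
    · simp
  | succ k ih =>
    obtain ⟨s, m, M, hmM, d, hd, hle⟩ := ih
    obtain ⟨i₁, hi₁, hmax⟩ := C.exists_max_image (x s) hCne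
    obtain ⟨i₂, hi₂, hmn⟩ := C.exists_min_image (x s) hCne
    obtain ⟨s', hs', h⟩ := dyn_grow hδ hδ1 hB (hx.affine hB 1 (-x s i₂)) hdiag hsym hmin C hC hconn
      C.card {i₁} (by simpa using hi₁) (by simp) (by simp) s (x s i₁ - x s i₂)
      (by have := hmn i₁ hi₁; linarith)
      (fun i hi => by have := hmn i hi; linarith)
      (fun i hi => by rw [Finset.mem_singleton] at hi; subst hi; linarith)
    have hup := dyn_mono_le hB hx C s s' hs' (fun u _ _ => hC u) (x s i₁) hmax
    refine ⟨s', x s i₂ + δ ^ C.card * (x s i₁ - x s i₂), x s i₁, fun i hi => ⟨?_, hup i hi⟩,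
      d, hd, ?_⟩
    · have := h i hi
      linarith
    · have h1 := (hmM i₁ hi₁).2
      have h2 := (hmM i₂ hi₂).1
      have : (1 - δ ^ C.card) * (x s i₁ - x s i₂) ≤ (1 - δ ^ C.card) * ((1 - δ ^ C.card) ^ k * d) :=
        mul_le_mul_of_nonneg_left (by linarith) hq
      rw [pow_succ]
      linarith

theorem dyn_converge {n : ℕ} {B : ℕ → Matrix (Fin n) (Fin n) ℝ} {x : ℕ → Fin n → ℝ}
    {δ : ℝ} (hδ : 0 < δ) (hδ1 : δ ≤ 1)
    (hB : ∀ t, RowStochastic (B t)) (hx : IsDyn B x)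
    (hdiag : ∀ t i, 0 < B t i i)
    (hsym : ∀ t i j, 0 < B t i j ↔ 0 < B t j i)
    (hmin : ∀ t i j, 0 < B t i j → δ < B t i j)
    (C : Finset (Fin n)) (hCne : C.Nonempty) (hC : ∀ t, ∀ i ∈ C, ∀ j, j ∉ C → B t i j = 0)
    (hconn : ∀ S, S ⊆ C → S.Nonempty → S ≠ C → ∀ s, ∃ t, s ≤ t ∧
      ∃ i ∈ S, ∃ j ∈ C, j ∉ S ∧ 0 < B t i j) :
    ∃ L, ∀ i ∈ C, Tendsto (fun t => x t i) atTop (nhds L) := by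
  have hq : 0 ≤ 1 - δ ^ C.card := sub_nonneg.2 (pow_le_one₀ hδ.le hδ1)
  have hq1 : 1 - δ ^ C.card < 1 := by have := pow_pos hδ C.card; linarith
  have key : ∀ ε > 0, ∃ s, ∀ t ≥ s, ∀ t' ≥ s, ∀ i ∈ C, ∀ j ∈ C, |x t i - x t' j| < ε := by
    intro ε hε
    have hlim := (tendsto_pow_atTop_nhds_zero_of_lt_one hq hq1).mul_const
      (x 0 (C.exists_max_image (x 0) hCne).choose - x 0 (C.exists_min_image (x 0) hCne).choose)
    rw [zero_mul] at hlim
    obtain ⟨k, hk⟩ := (hlim.eventually (gt_mem_nhds hε)).exists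
    obtain ⟨s, m, M, hmM, d, rfl, hle⟩ :=
      dyn_contract hδ hδ1 hB hx hdiag hsym hmin C hCne hC hconn k
    refine ⟨s, fun t ht t' ht' i hi j hj => ?_⟩
    have a1 := dyn_mono hB hx C s t ht (fun u _ _ => hC u) m (fun i hi => (hmM i hi).1) i hi
    have a2 := dyn_mono hB hx C s t' ht' (fun u _ _ => hC u) m (fun i hi => (hmM i hi).1) j hj
    have a3 := dyn_mono_le hB hx C s t ht (fun u _ _ => hC u) M (fun i hi => (hmM i hi).2) i hi
    have a4 := dyn_mono_le hB hx C s t' ht' (fun u _ _ => hC u) M (fun i hi => (hmM i hi).2) j hj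
    rw [abs_lt]
    constructor <;> linarith
  obtain ⟨i₀, hi₀⟩ := hCne
  have hcau : CauchySeq (fun t => x t i₀) := by
    rw [Metric.cauchySeq_iff]
    intro ε hε
    obtain ⟨s, hs⟩ := key ε hε
    exact ⟨s, fun t ht t' ht' => by rw [Real.dist_eq]; exact hs t ht t' ht' i₀ hi₀ i₀ hi₀⟩
  obtain ⟨L, hL⟩ := cauchySeq_tendsto_of_complete hcau
  refine ⟨L, fun i hi => ?_⟩
  have hdiff : Tendsto (fun t => x t i - x t i₀) atTop (nhds 0) := by
    rw [Metric.tendsto_atTop]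
    intro ε hε
    obtain ⟨s, hs⟩ := key ε hε
    exact ⟨s, fun t ht => by
      rw [Real.dist_eq, sub_zero]; exact hs t ht t ht i hi i₀ hi₀⟩
  simpa using hdiff.add hL

theorem backProd_shift {n : ℕ} (A : ℕ → Matrix (Fin n) (Fin n) ℝ) (t₀ t : ℕ) :
    backProd A (t + t₀) = backProd (fun u => A (u + t₀)) t * backProd A t₀ := by
  induction t with
  | zero => simp [backProd]
  | succ t ih =>
    rw [show t + 1 + t₀ = (t + t₀) + 1 by omega]
    simp only [backProd]
    rw [ih, Matrix.mul_assoc]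

theorem backProd_stoch {n : ℕ} (B : ℕ → Matrix (Fin n) (Fin n) ℝ)
    (hB : ∀ t, RowStochastic (B t)) (t : ℕ) : RowStochastic (backProd B t) := by
  induction t with
  | zero =>
    refine ⟨fun i j => ?_, fun i => ?_⟩
    · simp only [backProd, Matrix.one_apply]; split_ifs <;> norm_num
    · simp [backProd, Matrix.one_apply]
  | succ t ih =>
    refine ⟨fun i j => ?_, fun i => ?_⟩
    · simp only [backProd, Matrix.mul_apply]
      exact Finset.sum_nonneg fun k _ => mul_nonneg ((hB t).1 i k) (ih.1 k j)
    · simp only [backProd, Matrix.mul_apply]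
      rw [Finset.sum_comm]
      simp only [← Finset.mul_sum, ih.2, mul_one, (hB t).2 i]

/-- **Stabilization theorem.** Under positive diagonals, symmetric zero pattern and a
uniform positive lower bound `δ` on positive entries, the backward accumulations converge
to `K · A(0,t₀)` where `K` is block diagonal (w.r.t. a partition `I₁,…,I_p` of the agents)
with consensus-matrix blocks. -/
theorem stabilization
    (n : ℕ) (hn : 1 ≤ n) (A : ℕ → Matrix (Fin n) (Fin n) ℝ) (δ : ℝ) (hδ : 0 < δ)
    (hstoch : ∀ t, RowStochastic (A t))
    (hdiag : ∀ t i, 0 < A t i i)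
    (hsym : ∀ t i j, 0 < A t i j ↔ 0 < A t j i)
    (hmin : ∀ t i j, 0 < A t i j → δ < A t i j) :
    ∃ (t₀ : ℕ) (p : ℕ) (I : Fin p → Finset (Fin n)),
      (∀ l, (I l).Nonempty) ∧
      (∀ l m, l ≠ m → Disjoint (I l) (I m)) ∧
      (∀ i : Fin n, ∃ l, i ∈ I l) ∧
      ∃ K : Matrix (Fin n) (Fin n) ℝ,
        RowStochastic K ∧
        (∀ l m, l ≠ m → ∀ i ∈ I l, ∀ j ∈ I m, K i j = 0) ∧
        (∀ l, ∀ i ∈ I l, ∀ j ∈ I l, K i = K j) ∧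
        Tendsto (fun t => backProd A t) atTop (nhds (K * backProd A t₀)) := by
  classical
  have hδ1 : δ ≤ 1 := by
    have i : Fin n := ⟨0, hn⟩
    have h1 := hmin 0 i i (hdiag 0 i)
    have h2 : A 0 i i ≤ ∑ j, A 0 i j :=
      Finset.single_le_sum (fun j _ => (hstoch 0).1 i j) (Finset.mem_univ i)
    rw [(hstoch 0).2 i] at h2
    linarith
  let R : Fin n → Fin n → Prop := fun i j => ∃ᶠ t in atTop, 0 < A t i j
  have hRsymm : ∀ i j, R i j → R j i := fun i j h => h.mono fun t ht => (hsym t i j).1 ht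
  let r : Setoid (Fin n) :=
    { r := Relation.ReflTransGen R
      iseqv := ⟨fun _ => Relation.ReflTransGen.refl,
        fun h => by
          induction h with
          | refl => exact Relation.ReflTransGen.refl
          | tail _ h ih => exact Relation.ReflTransGen.head (hRsymm _ _ h) ih,
        fun h1 h2 => h1.trans h2⟩ }
  have hev : ∀ᶠ t in atTop, ∀ i j, ¬ R i j → A t i j = 0 := by
    rw [Filter.eventually_all]; intro i
    rw [Filter.eventually_all]; intro j
    by_cases h : R i j
    · exact Filter.Eventually.of_forall fun t hn => absurd h hn
    · have h' := Filter.not_frequently.1 h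
      filter_upwards [h'] with t ht _
      exact le_antisymm (not_lt.1 ht) ((hstoch t).1 i j)
  obtain ⟨t₀, ht₀⟩ := Filter.eventually_atTop.1 hev
  let B : ℕ → Matrix (Fin n) (Fin n) ℝ := fun u => A (u + t₀)
  have hB : ∀ t, RowStochastic (B t) := fun t => hstoch _
  let Q := Quotient r
  let q : Fin n → Q := fun i => Quotient.mk r i
  have hRq : ∀ i j, R i j → q i = q j := fun i j h =>
    Quotient.sound (s := r) (Relation.ReflTransGen.single h)
  let e : Q ≃ Fin (Fintype.card Q) := Fintype.equivFin Q
  let C : Q → Finset (Fin n) := fun c => Finset.univ.filter (fun i => q i = c)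
  have hmem : ∀ c i, i ∈ C c ↔ q i = c := fun c i => by simp [C]
  have hCne : ∀ c, (C c).Nonempty := fun c => by
    obtain ⟨i, hi⟩ := Quotient.exists_rep c
    exact ⟨i, (hmem c i).2 hi⟩
  have hC : ∀ c t, ∀ i ∈ C c, ∀ j, j ∉ C c → B t i j = 0 := by
    intro c t i hi j hj
    refine ht₀ (t + t₀) (by omega) i j fun hR => hj ?_
    rw [hmem] at hi ⊢
    rw [← hRq i j hR, hi]
  have hconn : ∀ c, ∀ S, S ⊆ C c → S.Nonempty → S ≠ C c → ∀ s, ∃ t, s ≤ t ∧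
      ∃ i ∈ S, ∃ j ∈ C c, j ∉ S ∧ 0 < B t i j := by
    intro c S hSC hne hSne s
    by_contra hcon
    apply hSne
    refine Finset.Subset.antisymm hSC fun j hj => ?_
    obtain ⟨i, hi⟩ := hne
    have hic := (hmem c i).1 (hSC hi)
    have hjc := (hmem c j).1 hj
    have hreach : Relation.ReflTransGen R i j := Quotient.exact (s := r) (hic.trans hjc.symm)
    clear hj hjc
    induction hreach with
    | refl => exact hi
    | @tail a b _ hab ha =>
      by_contra hb
      obtain ⟨t, ht, hpos⟩ := (Filter.frequently_atTop.1 hab) (s + t₀)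
      refine hcon ⟨t - t₀, by omega, a, ha, b, ?_, hb, ?_⟩
      · rw [hmem, ← hRq a b hab, ← hmem]; exact hSC ha
      · change 0 < A (t - t₀ + t₀) a b
        rwa [Nat.sub_add_cancel (by omega)]
  have hdyn : ∀ j, IsDyn B (fun t i => backProd B t i j) := fun j t i => by
    simp only [backProd, Matrix.mul_apply]
  have hconv : ∀ c j, ∃ L, ∀ i ∈ C c, Tendsto (fun t => backProd B t i j) atTop (nhds L) :=
    fun c j => dyn_converge hδ hδ1 hB (hdyn j) (fun t => hdiag _) (fun t => hsym _)
      (fun t => hmin _) (C c) (hCne c) (hC c) (hconn c)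
  choose L hL using hconv
  let K : Matrix (Fin n) (Fin n) ℝ := Matrix.of fun i j => L (q i) j
  have hK : ∀ i j, Tendsto (fun t => backProd B t i j) atTop (nhds (K i j)) := fun i j =>
    hL (q i) j i ((hmem _ _).2 rfl)
  refine ⟨t₀, Fintype.card Q, fun l => C (e.symm l), fun l => hCne _, ?_, ?_, K, ⟨?_, ?_⟩,
    ?_, ?_, ?_⟩
  · intro l m hlm
    rw [Finset.disjoint_left]
    intro i h1 h2
    rw [hmem] at h1 h2
    exact hlm (e.symm.injective (h1.symm.trans h2))
  · exact fun i => ⟨e (q i), by rw [hmem]; simp⟩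
  · exact fun i j => ge_of_tendsto' (hK i j) fun t => (backProd_stoch B hB t).1 i j
  · intro i
    have h1 := tendsto_finsetSum Finset.univ fun j (_ : j ∈ Finset.univ) => hK i j
    simp only [(backProd_stoch B hB _).2 i] at h1
    exact tendsto_nhds_unique h1 tendsto_const_nhds
  · intro l m hlm i hi j hj
    have hz : ∀ t, backProd B t i j ≤ 0 := fun t =>
      dyn_mono_le hB (hdyn j) (C (e.symm l)) 0 t (Nat.zero_le _) (fun u _ _ => hC _ u) 0
        (fun i' hi' => by
          have hne : i' ≠ j := by
            rintro rfl
            rw [hmem] at hi' hj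
            exact hlm (e.symm.injective (hi'.symm.trans hj))
          simp [backProd, Matrix.one_apply, hne]) i hi
    refine le_antisymm (le_of_tendsto' (hK i j) hz) ?_
    exact ge_of_tendsto' (hK i j) fun t => (backProd_stoch B hB t).1 i j
  · intro l i hi j hj
    rw [hmem] at hi hj
    funext k
    simp only [K, Matrix.of_apply, hi, hj]
  · rw [← tendsto_add_atTop_iff_nat t₀]
    simp only [backProd_shift A t₀]
    have hKt : Tendsto (fun t => backProd B t) atTop (nhds K) :=
      tendsto_pi_nhds.2 fun i => tendsto_pi_nhds.2 fun j => hK i j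
    exact hKt.mul_const (backProd A t₀)
end

section
/- Let n ≥ 1, δ > 0, and let (A(t))_{t∈ℕ} be a sequence of confidence matrices (row-stochastic n×n matrices with nonnegative real entries) such that for all t: (1) every diagonal entry of A(t) is positive; (2) A(t)_{ij} > 0 ⟺ A(t)_{ji} > 0 for all i,j; (3) every positive entry of A(t) is greater than δ. Then for every pair of time steps t₀ < t₁, the lowest positive entry of the accumulation A(t₀,t₁) := A(t₁−1)···A(t₀) is greater than δ^{n²−n+2}. -/
open Matrix Filter Finset

/-- Accumulation `A(t₀,t₁) = A(t₁-1) ⋯ A(t₀)`. -/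
def accum {n : ℕ} (A : ℕ → Matrix (Fin n) (Fin n) ℝ) (t₀ t₁ : ℕ) : Matrix (Fin n) (Fin n) ℝ :=
  backProd (fun s => A (t₀ + s)) (t₁ - t₀)

theorem backProd_lower {n : ℕ} (δ : ℝ) (hδ : 0 < δ) (hδ1 : δ ≤ 1)
    (A : ℕ → Matrix (Fin n) (Fin n) ℝ)
    (hstoch : ∀ t, RowStochastic (A t))
    (hdiag : ∀ t i, 0 < A t i i)
    (hsym : ∀ t i j, 0 < A t i j ↔ 0 < A t j i)
    (hmin : ∀ t i j, 0 < A t i j → δ < A t i j) (j : Fin n) (t : ℕ) :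
    (∀ i, 0 ≤ backProd A t i j) ∧ ∀ i, 0 < backProd A t i j →
      δ ^ (Finset.univ.filter (fun k => 0 < backProd A t k j)).card ≤ backProd A t i j := by
  induction t with
  | zero =>
    simp only [backProd, Matrix.one_apply]
    refine ⟨fun i => by split_ifs <;> norm_num, fun i hi => ?_⟩
    split_ifs at hi ⊢ with h
    · exact pow_le_one₀ hδ.le hδ1
    · exact absurd hi (lt_irrefl _)
  | succ t ih =>
    obtain ⟨ih0, ih⟩ := ih
    set x : Fin n → ℝ := fun k => backProd A t k j with hx
    have hx' : ∀ i, backProd A (t+1) i j = ∑ k, A t i k * x k := fun i => by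
      simp [backProd, Matrix.mul_apply, hx]
    have hA0 := (hstoch t).1
    have hterm : ∀ i k, 0 ≤ A t i k * x k := fun i k => mul_nonneg (hA0 i k) (ih0 k)
    have hge : ∀ i k, A t i k * x k ≤ ∑ k, A t i k * x k := fun i k =>
      Finset.single_le_sum (f := fun k => A t i k * x k) (fun k _ => hterm i k)
        (Finset.mem_univ k)
    simp only [hx']
    refine ⟨fun i => Finset.sum_nonneg fun k _ => hterm i k, fun i hi => ?_⟩
    set S := Finset.univ.filter (fun k => 0 < x k) with hS
    set S' := Finset.univ.filter (fun i => 0 < ∑ k, A t i k * x k) with hS'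
    have ih' : ∀ i, 0 < x i → δ ^ S.card ≤ x i := ih
    have hsub : S ⊆ S' := by
      intro k hk
      simp only [hS, hS', Finset.mem_filter, Finset.mem_univ, true_and] at hk ⊢
      exact lt_of_lt_of_le (mul_pos (hdiag t k) hk) (hge k k)
    by_cases hEq : S = S'
    · have hiS : i ∈ S := by rw [hEq]; simpa [hS'] using hi
      have hxi : 0 < x i := by simpa [hS] using hiS
      rw [← hEq]
      calc δ ^ S.card = ∑ k, A t i k * δ ^ S.card := by
            rw [← Finset.sum_mul, (hstoch t).2 i, one_mul]
        _ ≤ ∑ k, A t i k * x k := by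
            refine Finset.sum_le_sum fun k _ => ?_
            rcases (hA0 i k).eq_or_lt with h | h
            · simp [← h]
            · have hk : k ∈ S := by
                rw [hEq]
                simp only [hS', Finset.mem_filter, Finset.mem_univ, true_and]
                exact lt_of_lt_of_le (mul_pos ((hsym t i k).1 h) hxi) (hge k i)
              have hxk : 0 < x k := by simpa [hS] using hk
              exact mul_le_mul_of_nonneg_left (ih' k hxk) h.le
    · have hcard : S.card + 1 ≤ S'.card :=
        Finset.card_lt_card (Finset.ssubset_iff_subset_ne.2 ⟨hsub, hEq⟩)
      obtain ⟨k, -, hk⟩ := Finset.exists_ne_zero_of_sum_ne_zero hi.ne'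
      have h1 : 0 < A t i k := lt_of_le_of_ne (hA0 i k) fun h => hk (by simp [← h])
      have h2 : 0 < x k := lt_of_le_of_ne (ih0 k) fun h => hk (by
        have : x k = 0 := h.symm
        simp [this])
      calc δ ^ S'.card ≤ δ ^ (S.card + 1) := pow_le_pow_of_le_one hδ.le hδ1 hcard
        _ = δ * δ ^ S.card := by ring
        _ ≤ A t i k * x k := mul_le_mul (hmin t i k h1).le (ih' k h2) (by positivity) h1.le
        _ ≤ _ := hge i k

/-- **Proposition 2.** Under positive diagonals, symmetric zero pattern and a uniform lower
bound `δ` on positive entries, every positive entry of any accumulation `A(t₀,t₁)` is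
greater than `δ^(n²-n+2)`. -/
theorem accumulation_lower_bound
    (n : ℕ) (hn : 1 ≤ n) (δ : ℝ) (hδ : 0 < δ)
    (A : ℕ → Matrix (Fin n) (Fin n) ℝ)
    (hstoch : ∀ t, RowStochastic (A t))
    (hdiag : ∀ t i, 0 < A t i i)
    (hsym : ∀ t i j, 0 < A t i j ↔ 0 < A t j i)
    (hmin : ∀ t i j, 0 < A t i j → δ < A t i j) :
    ∀ t₀ t₁ : ℕ, t₀ < t₁ → ∀ i j : Fin n,
      0 < accum A t₀ t₁ i j → δ ^ (n ^ 2 - n + 2) < accum A t₀ t₁ i j := by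
  intro t₀ t₁ _ i j hpos
  have hδ1 : δ < 1 := by
    refine (hmin 0 i i (hdiag 0 i)).trans_le ?_
    rw [← (hstoch 0).2 i]
    exact Finset.single_le_sum (f := fun k => A 0 i k) (fun k _ => (hstoch 0).1 i k)
      (Finset.mem_univ i)
  have h := (backProd_lower δ hδ hδ1.le (fun s => A (t₀ + s)) (fun t => hstoch _)
    (fun t => hdiag _) (fun t => hsym _) (fun t => hmin _) j (t₁ - t₀)).2 i hpos
  refine lt_of_lt_of_le ?_ h
  apply pow_lt_pow_right_of_lt_one₀ hδ hδ1
  refine lt_of_le_of_lt (Finset.card_le_univ _) ?_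
  rw [Fintype.card_fin]
  obtain ⟨m, rfl⟩ : ∃ m, n = m + 1 := ⟨n - 1, by omega⟩
  have : (m + 1) ^ 2 - (m + 1) = m * m + m := by
    rw [Nat.sub_eq_iff_eq_add (by nlinarith)]; ring
  rw [this]
  nlinarith
end

section
/- Let (A(t))_{t∈ℕ} be a sequence of row-stochastic nonnegative n×n real matrices, and let (δ_t)_{t∈ℕ} be a sequence of positive reals with Σ_{t=0}^{∞} δ_t = +∞. If for every t the scrambling coefficient satisfies min_{i,j} Σ_{k=1}^{n} min{A(t)_{ik}, A(t)_{jk}} ≥ δ_t, then there exists a consensus matrix K (a row-stochastic matrix all of whose rows are equal) such that the backward product A(0,t) := A(t−1)···A(0) converges to K as t → ∞. -/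
open Matrix Filter Finset

theorem scr_contract {n : ℕ} (p q x : Fin n → ℝ) (d D : ℝ)
    (hp1 : ∑ k, p k = 1) (hq1 : ∑ k, q k = 1)
    (hd : d ≤ ∑ k, min (p k) (q k)) (hD : 0 ≤ D) (hx : ∀ k l, x k - x l ≤ D) :
    ∑ k, p k * x k - ∑ k, q k * x k ≤ (1 - d) * D := by
  set u : Fin n → ℝ := fun k => p k - min (p k) (q k) with hu
  set v : Fin n → ℝ := fun k => q k - min (p k) (q k) with hv
  have hu0 : ∀ k, 0 ≤ u k := fun k => sub_nonneg.2 (min_le_left _ _)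
  have hv0 : ∀ k, 0 ≤ v k := fun k => sub_nonneg.2 (min_le_right _ _)
  set r : ℝ := 1 - ∑ k, min (p k) (q k) with hr
  have hur : ∑ k, u k = r := by simp only [hu, Finset.sum_sub_distrib, hp1, hr]
  have hvr : ∑ k, v k = r := by simp only [hv, Finset.sum_sub_distrib, hq1, hr]
  have hdiff : ∑ k, p k * x k - ∑ k, q k * x k = ∑ k, u k * x k - ∑ k, v k * x k := by
    rw [← Finset.sum_sub_distrib, ← Finset.sum_sub_distrib]
    refine Finset.sum_congr rfl fun k _ => ?_
    simp only [hu, hv]; ring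
  have hr0 : 0 ≤ r := hur ▸ Finset.sum_nonneg fun k _ => hu0 k
  have hrd : r * D ≤ (1 - d) * D := mul_le_mul_of_nonneg_right (by linarith) hD
  rw [hdiff]
  refine le_trans ?_ hrd
  rcases hr0.eq_or_lt with h0 | hpos
  · have hu' : ∀ k, u k = 0 := fun k =>
      (Finset.sum_eq_zero_iff_of_nonneg fun k _ => hu0 k).1 (hur.trans h0.symm) k (Finset.mem_univ k)
    have hv' : ∀ k, v k = 0 := fun k =>
      (Finset.sum_eq_zero_iff_of_nonneg fun k _ => hv0 k).1 (hvr.trans h0.symm) k (Finset.mem_univ k)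
    simp [hu', hv', ← h0]
  · have key : r * (∑ k, u k * x k - ∑ k, v k * x k) = ∑ k, ∑ l, u k * v l * (x k - x l) := by
      have h1 : ∑ k, ∑ l, u k * v l * (x k - x l)
          = (∑ k, u k * x k) * (∑ l, v l) - (∑ k, u k) * (∑ l, v l * x l) := by
        rw [Finset.sum_mul_sum, Finset.sum_mul_sum, ← Finset.sum_sub_distrib]
        refine Finset.sum_congr rfl fun k _ => ?_
        rw [← Finset.sum_sub_distrib]
        refine Finset.sum_congr rfl fun l _ => ?_
        ring
      rw [h1, hur, hvr]; ring
    have hle : ∑ k, ∑ l, u k * v l * (x k - x l) ≤ r * (r * D) := by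
      calc _ ≤ ∑ k, ∑ l, u k * v l * D := by
            refine Finset.sum_le_sum fun k _ => Finset.sum_le_sum fun l _ => ?_
            exact mul_le_mul_of_nonneg_left (hx k l) (mul_nonneg (hu0 k) (hv0 l))
        _ = r * (r * D) := by
            simp_rw [← Finset.sum_mul, ← Finset.mul_sum, hvr, ← Finset.sum_mul, hur]; ring
    exact le_of_mul_le_mul_left (key ▸ hle) hpos

theorem scr_avg {n : ℕ} (p x : Fin n → ℝ) (y D : ℝ) (hp : ∀ k, 0 ≤ p k)
    (hp1 : ∑ k, p k = 1) (hx : ∀ k, |x k - y| ≤ D) : |∑ k, p k * x k - y| ≤ D := by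
  have h : ∑ k, p k * x k - y = ∑ k, p k * (x k - y) := by
    simp_rw [mul_sub, Finset.sum_sub_distrib, ← Finset.sum_mul, hp1, one_mul]
  rw [h]
  calc _ ≤ ∑ k, |p k * (x k - y)| := Finset.abs_sum_le_sum_abs _ _
    _ ≤ ∑ k, p k * D := by
        refine Finset.sum_le_sum fun k _ => ?_
        rw [abs_mul, abs_of_nonneg (hp k)]
        exact mul_le_mul_of_nonneg_left (hx k) (hp k)
    _ = D := by rw [← Finset.sum_mul, hp1, one_mul]

theorem scr_stoch {n : ℕ} (A : ℕ → Matrix (Fin n) (Fin n) ℝ)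
    (hstoch : ∀ t, RowStochastic (A t)) (t : ℕ) : RowStochastic (backProd A t) := by
  induction t with
  | zero =>
    refine ⟨fun i j => ?_, fun i => ?_⟩
    · simp only [backProd, Matrix.one_apply]; split_ifs <;> norm_num
    · simp [backProd, Matrix.one_apply]
  | succ t ih =>
    refine ⟨fun i j => ?_, fun i => ?_⟩
    · simp only [backProd, Matrix.mul_apply]
      exact Finset.sum_nonneg fun k _ => mul_nonneg ((hstoch t).1 i k) (ih.1 k j)
    · simp only [backProd, Matrix.mul_apply]
      rw [Finset.sum_comm]
      simp_rw [← Finset.mul_sum, ih.2, mul_one]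
      exact (hstoch t).2 i

/-- **Proposition 3.** If the scrambling coefficients of a sequence of row-stochastic
matrices are bounded below by positive reals `δ_t` with divergent sum, then the backward
products converge to a consensus matrix. -/
theorem scrambling_consensus
    (n : ℕ) (A : ℕ → Matrix (Fin n) (Fin n) ℝ) (δ : ℕ → ℝ)
    (hstoch : ∀ t, RowStochastic (A t))
    (hδpos : ∀ t, 0 < δ t)
    (hδdiv : Tendsto (fun T => ∑ t ∈ Finset.range T, δ t) atTop atTop)
    (hscr : ∀ t (i j : Fin n), δ t ≤ ∑ k, min (A t i k) (A t j k)) :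
    ∃ K : Matrix (Fin n) (Fin n) ℝ,
      RowStochastic K ∧ (∀ i j : Fin n, K i = K j) ∧
      Tendsto (fun t => backProd A t) atTop (nhds K) := by
  set D : ℕ → ℝ := fun t => Real.exp (-∑ s ∈ Finset.range t, δ s) with hDdef
  have hD0 : Tendsto D atTop (nhds 0) :=
    Real.tendsto_exp_atBot.comp (tendsto_neg_atTop_atBot.comp hδdiv)
  have hDpos : ∀ t, 0 < D t := fun t => Real.exp_pos _
  have hst := scr_stoch A hstoch
  have hdiff : ∀ t (c i j : Fin n), backProd A t i c - backProd A t j c ≤ D t := by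
    intro t
    induction t with
    | zero =>
      intro c i j
      simp only [backProd, Matrix.one_apply, hDdef]
      split_ifs <;> simp
    | succ t ih =>
      intro c i j
      have h := scr_contract (A t i) (A t j) (fun k => backProd A t k c) (δ t) (D t)
        ((hstoch t).2 i) ((hstoch t).2 j) (hscr t i j) (hDpos t).le (ih c)
      simp only [backProd, Matrix.mul_apply]
      refine h.trans ?_
      have h2 : D (t + 1) = Real.exp (-δ t) * D t := by
        simp only [hDdef]
        rw [← Real.exp_add, Finset.sum_range_succ]
        congr 1; ring
      rw [h2]
      exact mul_le_mul_of_nonneg_right (Real.one_sub_le_exp_neg _) (hDpos t).le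
  have habs : ∀ t (c i j : Fin n), |backProd A t i c - backProd A t j c| ≤ D t := by
    intro t c i j
    exact abs_sub_le_iff.2 ⟨hdiff t c i j, hdiff t c j i⟩
  have hc : ∀ t s, t ≤ s → ∀ c i j : Fin n, |backProd A s i c - backProd A t j c| ≤ D t := by
    intro t s hts
    induction s, hts using Nat.le_induction with
    | base => exact habs t
    | succ s _ ih =>
      intro c i j
      have := scr_avg (A s i) (fun k => backProd A s k c) (backProd A t j c) (D t)
        ((hstoch s).1 i) ((hstoch s).2 i) (fun k => ih c k j)
      simpa only [backProd, Matrix.mul_apply] using this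
  have hlim : ∀ i c : Fin n, ∃ L, Tendsto (fun t => backProd A t i c) atTop (nhds L) := by
    intro i c
    refine cauchySeq_tendsto_of_complete (cauchySeq_of_le_tendsto_0' D (fun t s hts => ?_) hD0)
    rw [dist_comm, Real.dist_eq]
    exact hc t s hts c i i
  choose K hK using hlim
  refine ⟨K, ⟨fun i j => ge_of_tendsto' (hK i j) fun t => (hst t).1 i j, fun i => ?_⟩, ?_, ?_⟩
  · refine tendsto_nhds_unique (tendsto_finsetSum Finset.univ fun j _ => hK i j) ?_
    simp_rw [(hst _).2 i]
    exact tendsto_const_nhds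
  · intro i j
    funext c
    have h1 := (hK i c).sub (hK j c)
    have h2 : Tendsto (fun t => backProd A t i c - backProd A t j c) atTop (nhds 0) :=
      squeeze_zero_norm (fun t => habs t c i j) hD0
    exact sub_eq_zero.1 (tendsto_nhds_unique h1 h2)
  · exact tendsto_pi_nhds.2 fun i => tendsto_pi_nhds.2 fun c => hK i c
end

section
/- Let A, B ∈ ℝ^{n×n} be row-stochastic nonnegative matrices such that A has a strictly positive diagonal and a symmetric zero pattern (A_{ij} > 0 ⟺ A_{ji} > 0 for all i,j), and B has at least one positive entry. If μ(AB) < μ(B), where μ(M) denotes the lowest positive entry of a nonnegative matrix M, then there exists a pair of indices (i,j) such that (AB)_{ij} > 0 and B_{ij} = 0. Equivalently: if AB and B have the same zero pattern, then μ(AB) ≥ μ(B). -/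
open Matrix Finset

/-- The lowest positive entry of a matrix. -/
noncomputable def muPos {n : ℕ} (M : Matrix (Fin n) (Fin n) ℝ) : ℝ :=
  sInf {x : ℝ | 0 < x ∧ ∃ i j, M i j = x}

/-- If `μ(AB) < μ(B)` then the product `AB` must have a positive entry where `B` has a zero;
equivalently, if `AB` and `B` have the same zero pattern then `μ(AB) ≥ μ(B)`. -/
theorem mu_decrease_loses_zero
    (n : ℕ) (A B : Matrix (Fin n) (Fin n) ℝ)
    (hA : RowStochastic A) (hB : RowStochastic B)
    (hAdiag : ∀ i, 0 < A i i)
    (hAsym : ∀ i j, 0 < A i j ↔ 0 < A j i)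
    (hBpos : ∃ i j, 0 < B i j) :
    (muPos (A * B) < muPos B → ∃ i j, 0 < (A * B) i j ∧ B i j = 0) ∧
    ((∀ i j, (A * B) i j = 0 ↔ B i j = 0) → muPos B ≤ muPos (A * B)) := by
  have key : (∀ i j, 0 < (A * B) i j → B i j ≠ 0) → muPos B ≤ muPos (A * B) := by
    intro h
    unfold muPos
    apply le_csInf
    · obtain ⟨i, j, hij⟩ := hBpos
      refine ⟨(A * B) i j, ?_, i, j, rfl⟩
      rw [Matrix.mul_apply]
      exact Finset.sum_pos' (fun k _ => mul_nonneg (hA.1 i k) (hB.1 k j))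
        ⟨i, Finset.mem_univ i, mul_pos (hAdiag i) hij⟩
    · rintro x ⟨hx, i, j, rfl⟩
      have hBij : 0 < B i j := lt_of_le_of_ne (hB.1 i j) (h i j hx).symm
      have hlow : ∀ k, 0 < B k j → sInf {x : ℝ | 0 < x ∧ ∃ i j, B i j = x} ≤ B k j := by
        intro k hk
        exact csInf_le ⟨0, fun y hy => hy.1.le⟩ ⟨hk, k, j, rfl⟩
      generalize sInf {x : ℝ | 0 < x ∧ ∃ i j, B i j = x} = m at hlow ⊢
      calc m = ∑ k, A i k * m := by rw [← Finset.sum_mul, hA.2 i, one_mul]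
        _ ≤ ∑ k, A i k * B k j := by
          apply Finset.sum_le_sum
          intro k _
          rcases (hA.1 i k).eq_or_lt with h0 | h0
          · simp [← h0]
          · apply mul_le_mul_of_nonneg_left _ h0.le
            apply hlow
            refine lt_of_le_of_ne (hB.1 k j) (h k j ?_).symm
            rw [Matrix.mul_apply]
            exact Finset.sum_pos' (fun l _ => mul_nonneg (hA.1 k l) (hB.1 l j))
              ⟨i, Finset.mem_univ i, mul_pos ((hAsym i k).1 h0) hBij⟩
        _ = (A * B) i j := (Matrix.mul_apply).symm
  constructor
  · intro hlt
    by_contra hne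
    exact absurd (key fun i j hp h0 => hne ⟨i, j, hp, h0⟩) (not_le.mpr hlt)
  · intro hz
    exact key fun i j hp h0 => hp.ne' ((hz i j).2 h0)
end

section
/- Let A ∈ ℝ^{n×n} be a row-stochastic nonnegative matrix and let B ∈ ℝ^{n×n} be arbitrary. Define the row-diameter d(M) of an n×n matrix M as the maximum Euclidean distance between two rows of M. Then d(AB) ≤ (1 − min_{i,j} Σ_{k=1}^{n} min{A_{ik}, A_{jk}}) · d(B). -/
open Matrix Finset

/-- The row-diameter of a matrix: the maximum Euclidean distance between two rows. -/
noncomputable def rowDiam {n : ℕ} (M : Matrix (Fin n) (Fin n) ℝ) : ℝ :=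
  ⨆ (i : Fin n) (j : Fin n), Real.sqrt (∑ k, (M i k - M j k) ^ 2)

lemma sqrt_rows_eq_norm {n : ℕ} (M : Matrix (Fin n) (Fin n) ℝ) (i j : Fin n) :
    Real.sqrt (∑ k, (M i k - M j k) ^ 2)
      = ‖(WithLp.toLp 2 (M i) : EuclideanSpace ℝ (Fin n)) - WithLp.toLp 2 (M j)‖ := by
  rw [EuclideanSpace.norm_eq]
  simp

lemma le_rowDiam {n : ℕ} (M : Matrix (Fin n) (Fin n) ℝ) (i j : Fin n) :
    Real.sqrt (∑ k, (M i k - M j k) ^ 2) ≤ rowDiam M := by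
  unfold rowDiam
  refine le_trans ?_ (le_ciSup (Set.finite_range _).bddAbove i)
  exact le_ciSup (f := fun j => Real.sqrt (∑ k, (M i k - M j k) ^ 2))
    (Set.finite_range _).bddAbove j

lemma rowDiam_nonneg {n : ℕ} (M : Matrix (Fin n) (Fin n) ℝ) : 0 ≤ rowDiam M :=
  Real.iSup_nonneg fun _ => Real.iSup_nonneg fun _ => Real.sqrt_nonneg _

lemma norm_weighted_sub_le {E : Type*} [NormedAddCommGroup E] [NormedSpace ℝ E] {n : ℕ}
    (p q : Fin n → ℝ) (b : Fin n → E) (c D : ℝ) (hp : ∀ k, 0 ≤ p k) (hq : ∀ k, 0 ≤ q k)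
    (hpc : ∑ k, p k = c) (hqc : ∑ k, q k = c) (hD : ∀ k l, ‖b k - b l‖ ≤ D) :
    ‖∑ k, p k • b k - ∑ k, q k • b k‖ ≤ c * D := by
  have hc : 0 ≤ c := hpc ▸ Finset.sum_nonneg fun k _ => hp k
  rcases hc.eq_or_lt with h0 | hpos
  · have hp0 : ∀ k, p k = 0 := fun k =>
      (Finset.sum_eq_zero_iff_of_nonneg fun k _ => hp k).1 (hpc.trans h0.symm) k (mem_univ k)
    have hq0 : ∀ k, q k = 0 := fun k =>
      (Finset.sum_eq_zero_iff_of_nonneg fun k _ => hq k).1 (hqc.trans h0.symm) k (mem_univ k)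
    simp [hp0, hq0, ← h0]
  · have key : c • (∑ k, p k • b k - ∑ k, q k • b k)
        = ∑ k, ∑ l, (p k * q l) • (b k - b l) := by
      have h1 : ∑ k, ∑ l, (p k * q l) • b k = c • ∑ k, p k • b k := by
        rw [Finset.smul_sum]
        refine Finset.sum_congr rfl fun k _ => ?_
        rw [← Finset.sum_smul, ← Finset.mul_sum, hqc, smul_smul, mul_comm]
      have h2 : ∑ k, ∑ l, (p k * q l) • b l = c • ∑ k, q k • b k := by
        rw [Finset.sum_comm, Finset.smul_sum]
        refine Finset.sum_congr rfl fun k _ => ?_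
        rw [← Finset.sum_smul, ← Finset.sum_mul, hpc, smul_smul]
      simp only [smul_sub, Finset.sum_sub_distrib]
      rw [h1, h2]
    have hb : ‖∑ k, ∑ l, (p k * q l) • (b k - b l)‖ ≤ ∑ k, ∑ l, (p k * q l) * D := by
      refine norm_sum_le_of_le _ fun k _ => norm_sum_le_of_le _ fun l _ => ?_
      have h := mul_nonneg (hp k) (hq l)
      rw [norm_smul, Real.norm_of_nonneg h]
      exact mul_le_mul_of_nonneg_left (hD k l) h
    have hs : ∑ k, ∑ l, (p k * q l) * D = c * (c * D) := by
      simp only [← Finset.sum_mul, ← Finset.mul_sum, hpc, hqc, mul_assoc]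
    rw [← key, hs, norm_smul, Real.norm_of_nonneg hc] at hb
    exact le_of_mul_le_mul_left hb hpos

/-- **Shrinking lemma.** Multiplication from the left by a row-stochastic matrix `A`
shrinks the row-diameter by the factor `1 - min_{i,j} Σ_k min{A_{ik}, A_{jk}}`. -/
theorem rowDiam_mul_le
    (n : ℕ) (A B : Matrix (Fin n) (Fin n) ℝ)
    (hAnonneg : ∀ i j, 0 ≤ A i j) (hAstoch : ∀ i, ∑ j, A i j = 1) :
    rowDiam (A * B) ≤
      (1 - ⨅ (i : Fin n) (j : Fin n), ∑ k, min (A i k) (A j k)) * rowDiam B := by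
  rcases Nat.eq_zero_or_pos n with rfl | hn
  · simp [rowDiam]
  have : Nonempty (Fin n) := ⟨⟨0, hn⟩⟩
  refine ciSup_le fun i => ciSup_le fun j => ?_
  have hrow : ∀ i, (WithLp.toLp 2 ((A * B) i) : EuclideanSpace ℝ (Fin n))
      = ∑ k, A i k • WithLp.toLp 2 (B k) := by
    intro i
    ext l
    simp [Matrix.mul_apply]
  have hmain := norm_weighted_sub_le (fun k => A i k - min (A i k) (A j k))
    (fun k => A j k - min (A i k) (A j k))
    (fun k => (WithLp.toLp 2 (B k) : EuclideanSpace ℝ (Fin n)))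
    (1 - ∑ k, min (A i k) (A j k)) (rowDiam B)
    (fun k => sub_nonneg.2 (min_le_left _ _)) (fun k => sub_nonneg.2 (min_le_right _ _))
    (by rw [Finset.sum_sub_distrib, hAstoch]) (by rw [Finset.sum_sub_distrib, hAstoch])
    (fun k l => by rw [← sqrt_rows_eq_norm]; exact le_rowDiam B k l)
  simp only [sub_smul, Finset.sum_sub_distrib, sub_sub_sub_cancel_right] at hmain
  rw [sqrt_rows_eq_norm, hrow, hrow]
  refine hmain.trans (mul_le_mul_of_nonneg_right (sub_le_sub_left ?_ _) (rowDiam_nonneg B))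
  refine le_trans (ciInf_le (Set.finite_range _).bddBelow i) ?_
  exact ciInf_le (f := fun j => ∑ k, min (A i k) (A j k)) (Set.finite_range _).bddBelow j
end

section
/- Fix ε > 0 and n ≥ 1. For any initial opinion profile X(0) ∈ ℝⁿ, define the Hegselmann–Krause dynamics by X(t+1) = A(X(t))·X(t), where A(X)_{ij} = 1/|I(i,X)| if |X_i − X_j| ≤ ε (with I(i,X) := { j : |X_i − X_j| ≤ ε }) and A(X)_{ij} = 0 otherwise. Then the sequence (X(t))_{t∈ℕ} converges to a limit X(∞) ∈ ℝⁿ, and there exist a time step t₀ and a partition I₁,…,I_p of {1,…,n} such that X(∞)_i = X(∞)_j whenever i and j lie in the same class I_l. -/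
open Matrix Filter Finset

/-- The Hegselmann–Krause confidence matrix with confidence bound `ε` at profile `X`:
agent `i` gives equal weight to every agent `j` with `|X i - X j| ≤ ε`. -/
noncomputable def hkMatrix {n : ℕ} (ε : ℝ) (X : Fin n → ℝ) : Matrix (Fin n) (Fin n) ℝ :=
  fun i j =>
    if |X i - X j| ≤ ε then
      (1 : ℝ) / (Finset.univ.filter fun k : Fin n => |X i - X k| ≤ ε).card
    else 0

/-- Neighbour indicator. -/
noncomputable def hkA {n : ℕ} (ε : ℝ) (x : Fin n → ℝ) (i j : Fin n) : ℝ :=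
  if |x i - x j| ≤ ε then 1 else 0

/-- One step of the dynamics. -/
noncomputable def hkStep {n : ℕ} (ε : ℝ) (x : Fin n → ℝ) : Fin n → ℝ :=
  (hkMatrix ε x).mulVec x

lemma hkA_symm {n : ℕ} (ε : ℝ) (x : Fin n → ℝ) (i j : Fin n) :
    hkA ε x i j = hkA ε x j i := by
  unfold hkA; rw [abs_sub_comm]

lemma hkA_nonneg {n : ℕ} (ε : ℝ) (x : Fin n → ℝ) (i j : Fin n) : 0 ≤ hkA ε x i j := by
  unfold hkA; split_ifs <;> norm_num

lemma hkA_le_one {n : ℕ} (ε : ℝ) (x : Fin n → ℝ) (i j : Fin n) : hkA ε x i j ≤ 1 := by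
  unfold hkA; split_ifs <;> norm_num

lemma hkA_self {n : ℕ} {ε : ℝ} (hε : 0 < ε) (x : Fin n → ℝ) (i : Fin n) :
    hkA ε x i i = 1 := by
  unfold hkA; simp [hε.le]

lemma hkN_pos {n : ℕ} {ε : ℝ} (hε : 0 < ε) (x : Fin n → ℝ) (i : Fin n) :
    1 ≤ ∑ j, hkA ε x i j := by
  rw [← hkA_self hε x i]
  exact Finset.single_le_sum (f := fun j => hkA ε x i j)
    (fun j _ => hkA_nonneg ε x i j) (Finset.mem_univ i)

lemma hkN_le {n : ℕ} (ε : ℝ) (x : Fin n → ℝ) (i : Fin n) :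
    ∑ j, hkA ε x i j ≤ n := by
  calc ∑ j, hkA ε x i j ≤ ∑ j : Fin n, (1 : ℝ) :=
        Finset.sum_le_sum fun j _ => hkA_le_one ε x i j
    _ = n := by simp

lemma hkStep_eq {n : ℕ} {ε : ℝ} (hε : 0 < ε) (x : Fin n → ℝ) (i : Fin n) :
    (∑ j, hkA ε x i j) * hkStep ε x i = ∑ j, hkA ε x i j * x j := by
  have hN := hkN_pos hε x i
  have hc : ((Finset.univ.filter fun k : Fin n => |x i - x k| ≤ ε).card : ℝ)
      = ∑ j, hkA ε x i j := by
    simp [hkA, Finset.sum_ite]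
  have h1 : hkStep ε x i = ∑ j, (hkA ε x i j / ∑ k, hkA ε x i k) * x j := by
    unfold hkStep Matrix.mulVec dotProduct hkMatrix
    refine Finset.sum_congr rfl fun j _ => ?_
    rw [hc]
    congr 1
    by_cases h : |x i - x j| ≤ ε
    · beta_reduce; rw [if_pos h]; congr 1; simp [hkA, h]
    · beta_reduce; rw [if_neg h]; simp [hkA, h]
  rw [h1, Finset.mul_sum]
  refine Finset.sum_congr rfl fun j _ => ?_
  field_simp

lemma hkStep_diff {n : ℕ} {ε : ℝ} (hε : 0 < ε) (x : Fin n → ℝ) (i : Fin n) (c : ℝ) :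
    ∑ j, hkA ε x i j * (x j - c) = (∑ j, hkA ε x i j) * (hkStep ε x i - c) := by
  rw [mul_sub, hkStep_eq hε, Finset.sum_mul, ← Finset.sum_sub_distrib]
  exact Finset.sum_congr rfl fun j _ => by ring

/-- The energy. -/
noncomputable def hkE {n : ℕ} (ε : ℝ) (x : Fin n → ℝ) : ℝ :=
  ∑ i, ∑ j, min ((x i - x j) ^ 2) (ε ^ 2)

lemma hkE_nonneg {n : ℕ} (ε : ℝ) (x : Fin n → ℝ) : 0 ≤ hkE ε x :=
  Finset.sum_nonneg fun i _ => Finset.sum_nonneg fun j _ => le_min (sq_nonneg _) (sq_nonneg _)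

lemma hkE_decr {n : ℕ} {ε : ℝ} (hε : 0 < ε) (x : Fin n → ℝ) :
    4 * ∑ i, (hkStep ε x i - x i) ^ 2 ≤ hkE ε x - hkE ε (hkStep ε x) := by
  set y := hkStep ε x with hy
  set v : Fin n → ℝ := fun i => y i - x i with hv
  have hyv : ∀ i, y i = x i + v i := fun i => by simp [hv]
  have e1 : hkE ε x = ∑ i, ∑ j, (hkA ε x i j * (x i - x j) ^ 2 + (1 - hkA ε x i j) * ε ^ 2) := by
    unfold hkE
    refine Finset.sum_congr rfl fun i _ => Finset.sum_congr rfl fun j _ => ?_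
    by_cases h : |x i - x j| ≤ ε
    · have : (x i - x j) ^ 2 ≤ ε ^ 2 := sq_le_sq' (by linarith [(abs_le.1 h).1]) (abs_le.1 h).2
      simp [hkA, h, this]
    · have : ε ^ 2 ≤ (x i - x j) ^ 2 := by
        rw [← sq_abs (x i - x j)]
        push Not at h
        exact pow_le_pow_left₀ hε.le h.le 2
      simp [hkA, h, this]
  have e2 : hkE ε y ≤ ∑ i, ∑ j, (hkA ε x i j * (y i - y j) ^ 2 + (1 - hkA ε x i j) * ε ^ 2) := by
    unfold hkE
    refine Finset.sum_le_sum fun i _ => Finset.sum_le_sum fun j _ => ?_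
    by_cases h : |x i - x j| ≤ ε
    · simp [hkA, h]
    · simp [hkA, h]
  have s1 : ∑ i, ∑ j, hkA ε x i j * (v i * (x j - x i)) = ∑ i, ∑ j, hkA ε x i j * v i ^ 2 := by
    refine Finset.sum_congr rfl fun i _ => ?_
    have := hkStep_diff hε x i (x i)
    calc ∑ j, hkA ε x i j * (v i * (x j - x i)) = v i * ∑ j, hkA ε x i j * (x j - x i) := by
          rw [Finset.mul_sum]; exact Finset.sum_congr rfl fun j _ => by ring
      _ = (∑ j, hkA ε x i j) * v i ^ 2 := by rw [this]; simp only [hv, ← hy]; ring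
      _ = _ := by rw [Finset.sum_mul]
  have s2 : ∑ i, ∑ j, hkA ε x i j * (v j * (x i - x j))
      = ∑ i, ∑ j, hkA ε x i j * (v i * (x j - x i)) := by
    rw [Finset.sum_comm]
    exact Finset.sum_congr rfl fun i _ => Finset.sum_congr rfl fun j _ => by
      rw [hkA_symm]
  have s3 : ∑ i, ∑ j, hkA ε x i j * v j ^ 2 = ∑ i, ∑ j, hkA ε x i j * v i ^ 2 := by
    rw [Finset.sum_comm]
    exact Finset.sum_congr rfl fun i _ => Finset.sum_congr rfl fun j _ => by
      rw [hkA_symm]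
  have s4 : 4 * ∑ i, v i ^ 2 ≤ ∑ i, ∑ j, hkA ε x i j * (v i + v j) ^ 2 := by
    rw [Finset.mul_sum]
    refine Finset.sum_le_sum fun i _ => ?_
    have := Finset.single_le_sum (f := fun j => hkA ε x i j * (v i + v j) ^ 2)
      (fun j _ => mul_nonneg (hkA_nonneg ε x i j) (sq_nonneg _)) (Finset.mem_univ i)
    simp only [hkA_self hε] at this
    linarith
  have key : ∑ i, ∑ j, (hkA ε x i j * (x i - x j) ^ 2 + (1 - hkA ε x i j) * ε ^ 2)
      - ∑ i, ∑ j, (hkA ε x i j * (y i - y j) ^ 2 + (1 - hkA ε x i j) * ε ^ 2)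
      = 2 * ∑ i, ∑ j, hkA ε x i j * (v i * (x j - x i))
       + 2 * ∑ i, ∑ j, hkA ε x i j * (v j * (x i - x j))
       - 2 * ∑ i, ∑ j, hkA ε x i j * v i ^ 2 - 2 * ∑ i, ∑ j, hkA ε x i j * v j ^ 2
       + ∑ i, ∑ j, hkA ε x i j * (v i + v j) ^ 2 := by
    simp only [Finset.mul_sum, ← Finset.sum_add_distrib, ← Finset.sum_sub_distrib]
    refine Finset.sum_congr rfl fun i _ => Finset.sum_congr rfl fun j _ => ?_
    rw [hyv i, hyv j]; ring
  have : ∑ i, (y i - x i) ^ 2 = ∑ i, v i ^ 2 := rfl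
  rw [this]
  linarith

/-- If nobody moves much, all neighbours are within `ε / 2`. -/
lemma hk_tight {n : ℕ} (hn : 1 ≤ n) {ε : ℝ} (hε : 0 < ε) (x : Fin n → ℝ)
    (hsmall : ∀ i, |hkStep ε x i - x i| ≤ ε / (4 * n ^ 2)) :
    ∀ i j, |x i - x j| ≤ ε → |x i - x j| ≤ ε / 2 := by
  have hn' : (1 : ℝ) ≤ n := by exact_mod_cast hn
  set δ := ε / (4 * (n : ℝ) ^ 2) with hδ
  have hδ0 : 0 < δ := by positivity
  have hδn : n * (n * δ) = ε / 4 := by rw [hδ]; field_simp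
  have hsum : ∀ i, |∑ j, hkA ε x i j * (x j - x i)| ≤ n * δ := by
    intro i
    rw [hkStep_diff hε, abs_mul, abs_of_nonneg (by linarith [hkN_pos hε x i])]
    exact mul_le_mul (hkN_le ε x i) (hsmall i) (abs_nonneg _) (by linarith)
  let bad : Finset (Fin n) := Finset.univ.filter fun k => ∃ j, x j - x k ≤ ε ∧ ε / 2 < x j - x k
  have hbad : bad = ∅ := by
    by_contra hne
    obtain ⟨k, hk, hmin⟩ := Finset.exists_min_image bad x (Finset.nonempty_iff_ne_empty.2 hne)
    obtain ⟨j, hj1, hj2⟩ := (Finset.mem_filter.1 hk).2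
    have hgood : ∀ m, x m < x k → ∀ q, x q - x m ≤ ε → x q - x m ≤ ε / 2 := by
      intro m hm q hq
      by_contra hcon
      push Not at hcon
      have := hmin m (Finset.mem_filter.2 ⟨Finset.mem_univ _, q, hq, hcon⟩)
      linarith
    obtain ⟨l, hl, hlmin⟩ := Finset.exists_min_image
      (Finset.univ.filter fun l => |x k - x l| ≤ ε) x
      ⟨k, by simp [hε.le]⟩
    have hl' := (Finset.mem_filter.1 hl).2
    have hlk : x l ≤ x k := hlmin k (by simp [hε.le])
    -- `l` has no neighbours to its left
    have hleft : ∀ m, |x l - x m| ≤ ε → x l ≤ x m := by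
      intro m hm
      by_contra hcon
      push Not at hcon
      have h1 := hgood m (by linarith) l (abs_le.1 hm).2
      have h2 : x k - x l ≤ ε / 2 := by
        rcases hlk.lt_or_eq with h | h
        · exact hgood l h k (abs_le.1 hl').2
        · rw [h]; linarith
      have := hlmin m (by
        simp only [Finset.mem_filter, Finset.mem_univ, true_and]
        exact abs_le.2 ⟨by linarith, by linarith⟩)
      linarith
    have hkl : x k - x l ≤ n * δ := by
      have h1 := Finset.single_le_sum (f := fun m => hkA ε x l m * (x m - x l)) (s := Finset.univ)
        (fun m _ => by
          by_cases h : |x l - x m| ≤ ε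
          · simp [hkA, h, hleft m h]
          · simp [hkA, h]) (Finset.mem_univ k)
      have h2 := (abs_le.1 (hsum l)).2
      have h3 : hkA ε x l k = 1 := by rw [hkA_symm]; simp [hkA, hl']
      simp only [h3] at h1
      linarith
    have hlow : ∀ m, -(n * δ) + (if m = j then ε / 2 else 0) ≤ hkA ε x k m * (x m - x k) := by
      intro m
      have hp : 0 ≤ n * δ := by positivity
      by_cases hmj : m = j
      · subst hmj
        have : |x k - x m| ≤ ε := abs_le.2 ⟨by linarith, by linarith⟩
        simp [hkA, this]; linarith
      · by_cases h : |x k - x m| ≤ ε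
        · have := hlmin m (by simp [h])
          simp [hkA, h, hmj]; linarith
        · simp [hkA, h, hmj, hp]
    have h1 := Finset.sum_le_sum fun m (_ : m ∈ Finset.univ) => hlow m
    rw [Finset.sum_add_distrib] at h1
    simp only [Finset.sum_const, Finset.card_univ, Fintype.card_fin, nsmul_eq_mul,
      Finset.sum_ite_eq', Finset.mem_univ, if_true] at h1
    have h2 := (abs_le.1 (hsum k)).2
    -- strictness: term `m = l`-free estimate
    have h3 : n * δ ≤ n * (n * δ) := by nlinarith [mul_pos (by linarith : (0:ℝ) < n) hδ0]
    have h4 : ∑ m, (-(n * δ) + (if m = j then ε / 2 else 0)) < ∑ m, hkA ε x k m * (x m - x k) := by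
      refine Finset.sum_lt_sum (fun m _ => hlow m) ⟨j, Finset.mem_univ _, ?_⟩
      have : |x k - x j| ≤ ε := abs_le.2 ⟨by linarith, by linarith⟩
      have hp : 0 ≤ n * δ := by positivity
      simp [hkA, this]; linarith
    rw [Finset.sum_add_distrib] at h4
    simp only [Finset.sum_const, Finset.card_univ, Fintype.card_fin, nsmul_eq_mul,
      Finset.sum_ite_eq', Finset.mem_univ, if_true] at h4
    linarith
  have main : ∀ k j, x j - x k ≤ ε → x j - x k ≤ ε / 2 := by
    intro k j h
    by_contra hcon
    push Not at hcon
    have : k ∈ bad := Finset.mem_filter.2 ⟨Finset.mem_univ _, j, h, hcon⟩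
    rw [hbad] at this
    simp at this
  intro i j h
  have := abs_le.1 h
  exact abs_le.2 ⟨by linarith [main i j (by linarith)], main j i this.2⟩

lemma hk_exists_ge {n : ℕ} {ε : ℝ} (hε : 0 < ε) (x : Fin n → ℝ) (i : Fin n) :
    ∃ k, |x i - x k| ≤ ε ∧ hkStep ε x i ≤ x k := by
  by_contra hcon
  push Not at hcon
  have h := hkStep_diff hε x i (hkStep ε x i)
  rw [sub_self, mul_zero] at h
  have : ∑ j, hkA ε x i j * (x j - hkStep ε x i) < ∑ j : Fin n, (0 : ℝ) := by
    refine Finset.sum_lt_sum (fun j _ => ?_) ⟨i, Finset.mem_univ _, ?_⟩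
    · by_cases hj : |x i - x j| ≤ ε
      · simp [hkA, hj, (hcon j hj).le]
      · simp [hkA, hj]
    · rw [hkA_self hε]; linarith [hcon i (by simp [hε.le])]
  simp at this
  linarith

lemma hk_exists_le {n : ℕ} {ε : ℝ} (hε : 0 < ε) (x : Fin n → ℝ) (i : Fin n) :
    ∃ k, |x i - x k| ≤ ε ∧ x k ≤ hkStep ε x i := by
  by_contra hcon
  push Not at hcon
  have h := hkStep_diff hε x i (hkStep ε x i)
  rw [sub_self, mul_zero] at h
  have : ∑ j : Fin n, (0 : ℝ) < ∑ j, hkA ε x i j * (x j - hkStep ε x i) := by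
    refine Finset.sum_lt_sum (fun j _ => ?_) ⟨i, Finset.mem_univ _, ?_⟩
    · by_cases hj : |x i - x j| ≤ ε
      · simp [hkA, hj, (hcon j hj).le]
      · simp [hkA, hj]
    · rw [hkA_self hε]; linarith [hcon i (by simp [hε.le])]
  simp at this
  linarith

lemma hk_fixed {n : ℕ} {ε : ℝ} (hε : 0 < ε) (x : Fin n → ℝ)
    (ht : ∀ i j, |x i - x j| ≤ ε → |x i - x j| ≤ ε / 2) :
    hkStep ε (hkStep ε x) = hkStep ε x := by
  have htr : ∀ i j k, |x i - x j| ≤ ε → |x j - x k| ≤ ε → |x i - x k| ≤ ε := by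
    intro i j k h1 h2
    have a := ht _ _ h1
    have b := ht _ _ h2
    have := abs_sub_le (x i) (x j) (x k)
    linarith
  have hsy : ∀ i j, |x i - x j| ≤ ε → |x j - x i| ≤ ε := fun i j h => by rwa [abs_sub_comm]
  have heq : ∀ i j, |x i - x j| ≤ ε → hkStep ε x i = hkStep ε x j := by
    intro i j h
    have hA : ∀ k, hkA ε x i k = hkA ε x j k := by
      intro k
      have : |x i - x k| ≤ ε ↔ |x j - x k| ≤ ε :=
        ⟨fun hk => htr _ _ _ (hsy _ _ h) hk, fun hk => htr _ _ _ h hk⟩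
      simp [hkA, this]
    have h1 := hkStep_eq hε x i
    have h2 := hkStep_eq hε x j
    have hN := hkN_pos hε x j
    simp only [hA] at h1
    rw [← h2] at h1
    exact mul_left_cancel₀ (by linarith) h1
  have hfar : ∀ i j, ε < x j - x i → ε < hkStep ε x j - hkStep ε x i := by
    intro i j h
    obtain ⟨k, hk1, hk2⟩ := hk_exists_ge hε x i
    obtain ⟨l, hl1, hl2⟩ := hk_exists_le hε x j
    have hk3 := abs_le.1 (ht _ _ hk1)
    have hl3 := abs_le.1 (ht _ _ hl1)
    have : ε < x l - x k := by
      by_contra hcon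
      push Not at hcon
      have hkl : |x k - x l| ≤ ε := abs_le.2 ⟨by linarith, by linarith⟩
      have := abs_le.1 (htr _ _ _ (htr _ _ _ hk1 hkl) (hsy _ _ hl1))
      linarith
    linarith
  funext i
  have h := hkStep_diff hε (hkStep ε x) i (hkStep ε x i)
  have hN := hkN_pos hε (hkStep ε x) i
  have h0 : ∑ j, hkA ε (hkStep ε x) i j * (hkStep ε x j - hkStep ε x i) = 0 := by
    refine Finset.sum_eq_zero fun j _ => ?_
    by_cases hij : |x i - x j| ≤ ε
    · rw [heq i j hij]; ring
    · have : ¬ |hkStep ε x i - hkStep ε x j| ≤ ε := by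
        rw [not_le] at hij ⊢
        rcases lt_abs.1 hij with h | h
        · exact lt_abs.2 (Or.inl (hfar j i h))
        · exact lt_abs.2 (Or.inr (by linarith [hfar i j (by linarith)]))
      simp [hkA, this]
  rw [h0] at h
  rcases mul_eq_zero.1 h.symm with h | h
  · linarith
  · linarith

/-- **Convergence of the Hegselmann–Krause dynamics.** The process `X(t+1) = A(X(t))·X(t)`
converges, and there are a time step `t₀` and a partition `I₁,…,I_p` of the agents such
that agents in the same class have equal limit opinions. -/
theorem hk_dynamics_converge
    (n : ℕ) (hn : 1 ≤ n) (ε : ℝ) (hε : 0 < ε)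
    (X : ℕ → Fin n → ℝ)
    (hdyn : ∀ t, X (t + 1) = (hkMatrix ε (X t)).mulVec (X t)) :
    ∃ Xinf : Fin n → ℝ,
      Tendsto X atTop (nhds Xinf) ∧
      ∃ (t₀ : ℕ) (p : ℕ) (I : Fin p → Finset (Fin n)),
        (∀ l, (I l).Nonempty) ∧
        (∀ l m, l ≠ m → Disjoint (I l) (I m)) ∧
        (∀ i : Fin n, ∃ l, i ∈ I l) ∧
        (∀ l, ∀ i ∈ I l, ∀ j ∈ I l, Xinf i = Xinf j) := by

  have hX : ∀ t, X (t + 1) = hkStep ε (X t) := hdyn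
  have hn' : (1 : ℝ) ≤ n := by exact_mod_cast hn
  have hanti : Antitone fun t => hkE ε (X t) := antitone_nat_of_succ_le fun t => by
    have h1 := hkE_decr hε (X t)
    have h2 : 0 ≤ ∑ i, (hkStep ε (X t) i - X t i) ^ 2 :=
      Finset.sum_nonneg fun i _ => sq_nonneg _
    rw [hX]; linarith
  have hlim := tendsto_atTop_ciInf hanti ⟨0, by rintro _ ⟨t, rfl⟩; exact hkE_nonneg ε (X t)⟩
  have hdiff : Tendsto (fun t => hkE ε (X t) - hkE ε (X (t + 1))) atTop (nhds 0) := by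
    have := hlim.sub (hlim.comp (tendsto_add_atTop_nat 1))
    rwa [sub_self] at this
  have hδ : 0 < ε / (4 * (n : ℝ) ^ 2) := by positivity
  obtain ⟨T, hT⟩ := (hdiff.eventually (gt_mem_nhds (pow_pos hδ 2))).exists
  have hsmall : ∀ i, |hkStep ε (X T) i - X T i| ≤ ε / (4 * (n : ℝ) ^ 2) := by
    intro i
    have h1 := hkE_decr hε (X T)
    rw [← hX] at h1
    have h2 := Finset.single_le_sum (f := fun i => (X (T + 1) i - X T i) ^ 2)
      (fun i _ => sq_nonneg _) (Finset.mem_univ i)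
    rw [← hX]
    refine abs_le_of_sq_le_sq ?_ hδ.le
    have h3 := sq_nonneg (X (T + 1) i - X T i)
    linarith
  have hfix := hk_fixed hε (X T) (hk_tight hn hε (X T) hsmall)
  have hconst : ∀ s, X (T + 1 + s) = hkStep ε (X T) := by
    intro s
    induction s with
    | zero => exact hX T
    | succ s ih => rw [← Nat.add_assoc, hX, ih, hfix]
  refine ⟨hkStep ε (X T), ?_, 0, n, fun l => {l}, ?_, ?_, ?_, ?_⟩
  · refine tendsto_const_nhds.congr' ?_
    filter_upwards [eventually_ge_atTop (T + 1)] with t ht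
    obtain ⟨s, rfl⟩ := Nat.exists_eq_add_of_le ht
    exact (hconst s).symm
  · intro l; simp
  · intro l m h; simpa using h
  · intro i; exact ⟨i, by simp⟩
  · intro l i hi j hj
    rw [Finset.mem_singleton.1 hi, Finset.mem_singleton.1 hj]
end

section
/- Fix n ≥ 2, 0 < μ < 1/2, ε > 0, and an arbitrary sequence of pairs of distinct indices (i_t, j_t)_{t∈ℕ}. For any initial opinion profile X(0) ∈ ℝⁿ, define the Weisbuch–Deffuant dynamics by: at time t, if |X(t)_{i_t} − X(t)_{j_t}| ≤ ε, set X(t+1)_{i_t} = X(t)_{i_t} + μ·(X(t)_{j_t} − X(t)_{i_t}) and X(t+1)_{j_t} = X(t)_{j_t} + μ·(X(t)_{i_t} − X(t)_{j_t}), leaving all other coordinates unchanged; otherwise X(t+1) = X(t). Then the sequence (X(t))_{t∈ℕ} converges to a limit in ℝⁿ. -/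
open Filter

lemma wd_tent (x c δ : ℝ) (hδ : 0 < δ) :
    max 0 (δ - |x - c|) = (|x - (c + δ)| + |x - (c - δ)| - 2 * |x - c|) / 2 := by
  rcases abs_cases (x - c) with h1 | h1 <;> rcases abs_cases (x - (c + δ)) with h2 | h2 <;>
  rcases abs_cases (x - (c - δ)) with h3 | h3 <;>
  rcases max_cases 0 (δ - |x - c|) with h4 | h4 <;> linarith [h1.1, h1.2, h2.1, h2.2, h3.1, h3.2, h4.1, h4.2]

lemma wd_sum_tent (N : ℕ) (x a δ : ℝ) (hδ : 0 < δ) :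
    ∑ l ∈ Finset.range N, max 0 (δ - |x - (a + 2 * δ * (l + 1))|) ≤ δ := by
  by_cases h : ∃ l0 ∈ Finset.range N, |x - (a + 2 * δ * ((l0 : ℕ) + 1))| < δ
  · obtain ⟨l0, hl0, h0⟩ := h
    rw [Finset.sum_eq_single_of_mem l0 hl0]
    · exact max_le hδ.le (by linarith [abs_nonneg (x - (a + 2 * δ * ((l0 : ℕ) + 1)))])
    · intro l _ hne
      apply max_eq_left
      rw [abs_lt] at h0
      rcases lt_or_gt_of_ne hne with h | h
      · have : (l : ℝ) + 1 ≤ l0 := by exact_mod_cast h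
        have := mul_le_mul_of_nonneg_left this hδ.le
        linarith [le_abs_self (x - (a + 2 * δ * ((l : ℕ) + 1)))]
      · have : (l0 : ℝ) + 1 ≤ l := by exact_mod_cast h
        have := mul_le_mul_of_nonneg_left this hδ.le
        linarith [neg_abs_le (x - (a + 2 * δ * ((l : ℕ) + 1)))]
  · push Not at h
    rw [Finset.sum_eq_zero]
    · exact hδ.le
    · intro l hl
      exact max_eq_left (by linarith [h l hl])

lemma wd_cross (u : ℕ → ℝ) (hs : Tendsto (fun t => u (t + 1) - u t) atTop (nhds 0))
    (a b c η : ℝ) (hac : a < c) (hcb : c < b) (hη : 0 < η)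
    (ha : ∃ᶠ t in atTop, u t < a) (hb : ∃ᶠ t in atTop, b < u t) :
    ∃ᶠ t in atTop, |u t - c| < η := by
  rw [frequently_atTop] at *
  intro N
  obtain ⟨M, hM⟩ := eventually_atTop.1 (hs.eventually (gt_mem_nhds hη))
  obtain ⟨s, hsN, hsa⟩ := ha (max N M)
  obtain ⟨r, hrs, hrb⟩ := hb s
  have hex : ∃ m, c ≤ u (s + m) := ⟨r - s, by rw [Nat.add_sub_cancel' hrs]; linarith⟩
  classical
  have h1 := Nat.find_spec hex
  have h2 := fun m => Nat.find_min hex (m := m)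
  generalize Nat.find hex = m at h1 h2
  have hN : N ≤ s := le_trans (le_max_left _ _) hsN
  have hM' : M ≤ s := le_trans (le_max_right _ _) hsN
  cases m with
  | zero => simp at h1; linarith
  | succ m =>
    refine ⟨s + (m + 1), by omega, ?_⟩
    have h3 := h2 m (by omega)
    have h4 := hM (s + m) (by omega)
    rw [← add_assoc] at h1 ⊢
    rw [abs_lt]
    constructor <;> linarith



/-- **Convergence of the Weisbuch–Deffuant dynamics.** For an arbitrary sequence of pairs
of distinct agents `(i_t, j_t)`, the process in which at time `t` agents `i_t` and `j_t`
move towards each other by the fraction `μ` of their opinion difference whenever this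
difference is at most `ε` (and nothing happens otherwise) converges. -/
theorem wd_dynamics_converge
    (n : ℕ) (hn : 2 ≤ n) (μ ε : ℝ) (hμ0 : 0 < μ) (hμ : μ < 1 / 2) (hε : 0 < ε)
    (i j : ℕ → Fin n) (hij : ∀ t, i t ≠ j t)
    (X : ℕ → Fin n → ℝ)
    (hdyn : ∀ t, ∀ k : Fin n,
      X (t + 1) k =
        if |X t (i t) - X t (j t)| ≤ ε then
          if k = i t then X t (i t) + μ * (X t (j t) - X t (i t))
          else if k = j t then X t (j t) + μ * (X t (i t) - X t (j t))
          else X t k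
        else X t k) :
    ∃ L : Fin n → ℝ, Tendsto X atTop (nhds L) := by


  classical
  -- change of an additive functional in one step
  have hstep : ∀ (f : ℝ → ℝ) t, ∑ k, f (X (t + 1) k) - ∑ k, f (X t k) =
      if |X t (i t) - X t (j t)| ≤ ε then
        (f (X t (i t) + μ * (X t (j t) - X t (i t))) - f (X t (i t))) +
        (f (X t (j t) + μ * (X t (i t) - X t (j t))) - f (X t (j t))) else 0 := by
    intro f t
    rw [← Finset.sum_sub_distrib]
    split_ifs with h
    · rw [Finset.sum_eq_add (i t) (j t) (hij t)]
      · simp [hdyn t, h, (hij t).symm]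
      · intro k _ hk
        simp [hdyn t, h, hk.1, hk.2]
      · simp
      · simp
    · apply Finset.sum_eq_zero
      intro k _
      simp [hdyn t, h]
  have hanti : ∀ f : ℝ → ℝ, (∀ a b, f (a + μ * (b - a)) ≤ (1 - μ) * f a + μ * f b) →
      Antitone (fun t => ∑ k, f (X t k)) := by
    intro f hf
    apply antitone_nat_of_succ_le
    intro t
    have h := hstep f t
    split_ifs at h
    · linarith [hf (X t (i t)) (X t (j t)), hf (X t (j t)) (X t (i t))]
    · linarith
  have hconv : ∀ f : ℝ → ℝ, (∀ x, 0 ≤ f x) →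
      (∀ a b, f (a + μ * (b - a)) ≤ (1 - μ) * f a + μ * f b) →
      ∃ l, Tendsto (fun t => ∑ k, f (X t k)) atTop (nhds l) := by
    intro f h0 hf
    refine ⟨_, tendsto_atTop_ciInf (hanti f hf) ⟨0, ?_⟩⟩
    rintro _ ⟨t, rfl⟩
    exact Finset.sum_nonneg fun k _ => h0 _
  have habs : ∀ c : ℝ, ∀ a b : ℝ, |a + μ * (b - a) - c| ≤ (1 - μ) * |a - c| + μ * |b - c| := by
    intro c a b
    calc |a + μ * (b - a) - c| = |(1 - μ) * (a - c) + μ * (b - c)| := by congr 1; ring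
      _ ≤ |(1 - μ) * (a - c)| + |μ * (b - c)| := abs_add_le _ _
      _ = _ := by
        rw [abs_mul, abs_mul, abs_of_pos hμ0, abs_of_pos (by linarith : 0 < 1 - μ)]
  -- steps tend to zero
  have hsteps : ∀ k, Tendsto (fun t => X (t + 1) k - X t k) atTop (nhds 0) := by
    intro k
    obtain ⟨l, hl⟩ := hconv (fun x => x ^ 2) (fun x => sq_nonneg x) (by
      intro a b
      nlinarith [mul_nonneg (mul_nonneg hμ0.le (by linarith : 0 ≤ 1 - μ)) (sq_nonneg (a - b))])
    have hd := hl.sub (hl.comp (tendsto_add_atTop_nat 1))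
    rw [sub_self] at hd
    have hsq : Tendsto (fun t => (X (t + 1) k - X t k) ^ 2) atTop (nhds 0) := by
      refine squeeze_zero (fun t => sq_nonneg _) (fun t => ?_) hd
      have h := hstep (fun x => x ^ 2) t
      have hk := hdyn t k
      simp only [Function.comp]
      have key : 0 ≤ μ * (2 - 3 * μ) * (X t (i t) - X t (j t)) ^ 2 :=
        mul_nonneg (mul_nonneg hμ0.le (by linarith)) (sq_nonneg _)
      have key2 : 0 ≤ μ * (2 - 2 * μ) * (X t (i t) - X t (j t)) ^ 2 :=
        mul_nonneg (mul_nonneg hμ0.le (by linarith)) (sq_nonneg _)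
      split_ifs at h hk with h1 h2 h3
      · rw [hk, h2]; linarith
      · rw [hk, h3]; linarith
      · rw [hk]; linarith
      · rw [hk]; linarith
    have := hsq.sqrt
    simp only [Real.sqrt_sq_eq_abs, Real.sqrt_zero] at this
    exact (tendsto_zero_iff_abs_tendsto_zero _).2 this
  have hbdd : ∀ k t, |X t k| ≤ ∑ k, |X 0 k| := by
    intro k t
    have h1 : |X t k| ≤ ∑ k, |X t k| :=
      Finset.single_le_sum (f := fun k => |X t k|) (fun _ _ => abs_nonneg _) (Finset.mem_univ k)
    exact h1.trans (hanti (fun x => |x|) (by simpa using habs 0) (Nat.zero_le t))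
  -- each coordinate converges
  have hcoord : ∀ k, ∃ l, Tendsto (fun t => X t k) atTop (nhds l) := by
    intro k
    refine tendsto_of_no_upcrossings (s := Set.univ) dense_univ ?_ ?_ ?_
    · rintro a - b - hab ⟨ha, hb⟩
      set δ : ℝ := (b - a) / (n + 2) / 2 with hδd
      have hn2 : (0 : ℝ) < n + 2 := by positivity
      have hδ : 0 < δ := by
        have : 0 < b - a := by linarith
        positivity
      have hδb : b = a + 2 * δ * (n + 2) := by rw [hδd]; field_simp; ring
      have hT : ∀ l : ℕ, ∃ τ, Tendsto (fun t => ∑ k, max 0 (δ - |X t k - (a + 2 * δ * (l + 1))|))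
          atTop (nhds τ) := by
        intro l
        obtain ⟨p, hp⟩ := hconv (fun x => |x - (a + 2 * δ * (l + 1) + δ)|)
          (fun _ => abs_nonneg _) (habs _)
        obtain ⟨q, hq⟩ := hconv (fun x => |x - (a + 2 * δ * (l + 1) - δ)|)
          (fun _ => abs_nonneg _) (habs _)
        obtain ⟨r, hr⟩ := hconv (fun x => |x - (a + 2 * δ * (l + 1))|)
          (fun _ => abs_nonneg _) (habs _)
        refine ⟨_, (((hp.add hq).sub (hr.const_mul 2)).div_const 2).congr fun t => ?_⟩
        simp only [wd_tent _ _ _ hδ, ← Finset.sum_div, Finset.sum_sub_distrib,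
          Finset.sum_add_distrib, Finset.mul_sum]
      choose τ hτ using hT
      have hτδ : ∀ l ∈ Finset.range (n + 1), δ ≤ τ l := by
        intro l hl
        by_contra! hlt
        obtain ⟨m, hm1, hm2⟩ := exists_between hlt
        have hev := (hτ l).eventually (gt_mem_nhds hm1)
        have hln : (l : ℝ) + 1 ≤ n + 1 := by
          have := Finset.mem_range.1 hl
          exact_mod_cast this
        have hlp : (0 : ℝ) < (l : ℝ) + 1 := by positivity
        have hfr := wd_cross (fun t => X t k) (hsteps k) a b (a + 2 * δ * (l + 1)) (δ - m)
          (by have := mul_pos hδ hlp; linarith) (by rw [hδb]; nlinarith) (by linarith) ha hb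
        obtain ⟨t, h1, h2⟩ := (hfr.and_eventually hev).exists
        have h3 : max 0 (δ - |X t k - (a + 2 * δ * (l + 1))|) ≤
            ∑ k, max 0 (δ - |X t k - (a + 2 * δ * (l + 1))|) :=
          Finset.single_le_sum (f := fun k => max 0 (δ - |X t k - (a + 2 * δ * (l + 1))|))
            (fun _ _ => le_max_left _ _) (Finset.mem_univ k)
        have h4 := le_max_right 0 (δ - |X t k - (a + 2 * δ * (l + 1))|)
        linarith
      have hsum := tendsto_finsetSum (Finset.range (n + 1)) fun l _ => hτ l
      have hle : ∑ l ∈ Finset.range (n + 1), τ l ≤ n * δ := by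
        refine le_of_tendsto' hsum fun t => ?_
        rw [Finset.sum_comm]
        refine (Finset.sum_le_sum fun k _ => wd_sum_tent (n + 1) (X t k) a δ hδ).trans ?_
        simp
      have hge := Finset.card_nsmul_le_sum _ _ _ hτδ
      simp at hge
      linarith
    · exact isBoundedUnder_of ⟨_, fun t => (abs_le.1 (hbdd k t)).2⟩
    · exact isBoundedUnder_of ⟨_, fun t => (abs_le.1 (hbdd k t)).1⟩
  choose L hL using hcoord
  exact ⟨L, tendsto_pi_nhds.2 hL⟩
end
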